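/- Let $\chi, \rho$ be positive smooth functions on the standard $S^3$ with $P\rho = -\chi\rho^{-7}$, where $P = \Delta^2 + \frac{1}{2}\Delta - \frac{15}{16}$. Then for each coordinate function $x_i$ ($i = 1,2,3,4$), $\int_{S^3} \langle\nabla\chi, \nabla x_i\rangle\, \rho^{-6}\, d\mu = 0$. -/

import Mathlib

open MeasureTheory Metric Set Real
open scoped RealInnerProductSpace

noncomputable section

/-- The ambient Euclidean space `ℝ⁴`. -/
abbrev E4 := EuclideanSpace ℝ (Fin 4)

/-- The standard round sphere `S³ ⊂ ℝ⁴`. -/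
def S3 : Set E4 := sphere (0 : E4) 1

/-- The standard (3-dimensional Hausdorff) measure on `S³`. -/
def muS : Measure E4 := μH[(3 : ℝ)].restrict S3

/-- Degree-zero homogeneous extension of a function on `S³` to `ℝ⁴ \ {0}`. -/
def ext0 (f : E4 → ℝ) : E4 → ℝ := fun x => f (‖x‖⁻¹ • x)

/-- The Laplace–Beltrami operator of the round `S³`, computed as the Euclidean Laplacian
of the degree-zero homogeneous extension (these agree on the sphere). -/
def sLap (f : E4 → ℝ) : E4 → ℝ := fun x =>
  ∑ i : Fin 4, fderiv ℝ (fun y => fderiv ℝ (ext0 f) y (EuclideanSpace.single i 1)) x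
    (EuclideanSpace.single i 1)

/-- The (tangential) gradient on `S³`, computed as the Euclidean gradient of the
degree-zero homogeneous extension. -/
def sGrad (f : E4 → ℝ) : E4 → E4 := fun x => gradient (ext0 f) x

/-- The Paneitz operator `P = Δ² + (1/2)Δ - 15/16` on the standard `S³`. -/
def Pan (f : E4 → ℝ) : E4 → ℝ := fun x =>
  sLap (sLap f) x + (1 / 2) * sLap f x - (15 / 16) * f x

/-- The Paneitz energy `E(φ) = ∫_{S³} [(Δφ)² - (1/2)|∇φ|² - (15/16)φ²] dμ`. -/
def Efun (f : E4 → ℝ) : ℝ :=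
  ∫ x, ((sLap f x) ^ 2 - (1 / 2) * ‖sGrad f x‖ ^ 2 - (15 / 16) * (f x) ^ 2) ∂muS

/-- Smoothness of a function on `S³` (smoothness of its homogeneous extension). -/
def SmoothS3 (f : E4 → ℝ) : Prop := ContDiffOn ℝ (⊤ : ℕ∞) (ext0 f) {0}ᶜ

/-- Membership surrogate for `H²(S³)`: the homogeneous extension is `C²` away from the
origin. -/
def H2S3 (f : E4 → ℝ) : Prop := ContDiffOn ℝ 2 (ext0 f) {0}ᶜ

/-- `‖φ⁻¹‖_{L⁶(S³)}²`. -/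
def invL6sq (f : E4 → ℝ) : ℝ := (∫ x, ((f x)⁻¹) ^ 6 ∂muS) ^ ((1 : ℝ) / 3)

/-!
Write `ξ_v = ⟪v, ·⟫` and `D_v = ∇ξ_v` on the unit `n`-sphere. The Paneitz operator `P` is symmetric
and infinitesimally conformally covariant along `D_v`:
`P (D_v - ((n - 4) / 2) ξ_v) = (D_v - ((n + 4) / 2) ξ_v) P`.
Since `D_v` has divergence `-n ξ_v`, the two weighted fields are negative transposes of each other,
hence `∫ P ρ * (D_v ρ - ((n - 4) / 2) ξ_v ρ) = 0` for every `ρ`. Substituting the equation for `P ρ`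
and integrating by parts once more moves `D_v` onto `χ`.

The divergence formula comes from rotation invariance of the Hausdorff measure: the rotation fields
`ξ_i D_v - ξ_v D_i` have integral zero on every function, and applying them to `ξ_i f` and summing
over an orthonormal basis gives `D_v f - n ξ_v f`.
-/

open Module Laplacian
open scoped Manifold ContDiff

section SkewAdjointFlow

variable {E : Type*} [NormedAddCommGroup E]

lemma hasDerivAt_exp_smul_apply [NormedSpace ℝ E] [CompleteSpace E] (A : E →L[ℝ] E) (θ : ℝ)
    (x : E) :
    HasDerivAt (fun t : ℝ => NormedSpace.exp (t • A) x) (A (NormedSpace.exp (θ • A) x)) θ :=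
  (hasDerivAt_exp_smul_const' A θ).clm_apply (hasDerivAt_const θ x) |>.congr_deriv (by simp)

lemma exists_linearIsometryEquiv_exp [InnerProductSpace ℝ E] [CompleteSpace E]
    {A : E →L[ℝ] E} (hA : A ∈ skewAdjoint (E →L[ℝ] E)) :
    ∃ R : E ≃ₗᵢ[ℝ] E, ⇑R = NormedSpace.exp A := by
  let +nondep : NormedAlgebra ℚ (E →L[ℝ] E) := .restrictScalars ℚ ℝ (E →L[ℝ] E)
  exact ⟨Unitary.linearIsometryEquiv ⟨_, NormedSpace.exp_mem_unitary_of_mem_skewAdjoint hA⟩, rfl⟩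

end SkewAdjointFlow

section SphereCalculus

variable {E : Type*} [NormedAddCommGroup E] [InnerProductSpace ℝ E]

lemma inv_norm_smul_mem_sphere {x : E} (hx : x ≠ 0) : ‖x‖⁻¹ • x ∈ sphere (0 : E) 1 :=
  mem_sphere_zero_iff_norm.2 (by simpa using norm_smul_inv_norm (𝕜 := ℝ) hx)

/-- The degree-zero homogeneous extension of a function on the unit sphere, with value `0` at the
origin. -/
def homExt (g : sphere (0 : E) 1 → ℝ) (x : E) : ℝ :=
  Function.extend Subtype.val g 0 (‖x‖⁻¹ • x)

lemma homExt_of_ne_zero (g : sphere (0 : E) 1 → ℝ) {x : E} (hx : x ≠ 0) :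
    homExt g x = g ⟨‖x‖⁻¹ • x, inv_norm_smul_mem_sphere hx⟩ :=
  Subtype.val_injective.extend_apply g 0 ⟨‖x‖⁻¹ • x, inv_norm_smul_mem_sphere hx⟩

lemma homExt_coe (g : sphere (0 : E) 1 → ℝ) (x : sphere (0 : E) 1) : homExt g x = g x := by
  rw [homExt, norm_eq_of_mem_sphere x, inv_one, one_smul, Subtype.val_injective.extend_apply]

lemma homExt_smul (g : sphere (0 : E) 1 → ℝ) {c : ℝ} (hc : 0 < c) (x : E) :
    homExt g (c • x) = homExt g x := by
  rw [homExt, homExt, norm_smul, Real.norm_of_nonneg hc.le, smul_smul, mul_inv_rev,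
    inv_mul_cancel_right₀ hc.ne']

lemma homExt_add (f g : sphere (0 : E) 1 → ℝ) : homExt (f + g) = homExt f + homExt g := by
  ext x
  simpa [homExt] using congrFun (Function.extend_add Subtype.val f g 0 0) (‖x‖⁻¹ • x)

lemma homExt_mul (f g : sphere (0 : E) 1 → ℝ) : homExt (f * g) = homExt f * homExt g := by
  ext x
  simpa [homExt] using congrFun (Function.extend_mul Subtype.val f g 0 0) (‖x‖⁻¹ • x)

lemma homExt_const_smul (c : ℝ) (g : sphere (0 : E) 1 → ℝ) : homExt (c • g) = c • homExt g := by
  ext x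
  simpa [homExt] using congrFun (Function.extend_smul c Subtype.val g 0) (‖x‖⁻¹ • x)

lemma fderiv_homExt_smul (g : sphere (0 : E) 1 → ℝ) {c : ℝ} (hc : 0 < c) (x v : E) :
    c * fderiv ℝ (homExt g) (c • x) v = fderiv ℝ (homExt g) x v := by
  have h := fderiv_comp_smul (𝕜 := ℝ) (f := homExt g) (x := x) c
  rw [funext (homExt_smul g hc)] at h
  rw [h, smul_apply, smul_eq_mul]

lemma fderiv_homExt_self {g : sphere (0 : E) 1 → ℝ} {x : E}
    (hg : DifferentiableAt ℝ (homExt g) x) : fderiv ℝ (homExt g) x x = 0 := by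
  have hray : HasDerivAt (fun t : ℝ => t • x) x 1 := by
    simpa using (hasDerivAt_id (1 : ℝ)).smul_const x
  have hderiv : HasFDerivAt (homExt g) (fderiv ℝ (homExt g) x) ((1 : ℝ) • x) := by
    rw [one_smul]
    exact hg.hasFDerivAt
  have hconst : (homExt g ∘ fun t : ℝ => t • x) =ᶠ[nhds 1] fun _ => homExt g x := by
    filter_upwards [lt_mem_nhds one_pos] with t ht using homExt_smul g ht x
  exact (hderiv.comp_hasDerivAt (1 : ℝ) hray).unique
    ((hasDerivAt_const 1 _).congr_of_eventuallyEq hconst)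

lemma hasFDerivAt_norm_of_mem_sphere (x : sphere (0 : E) 1) :
    HasFDerivAt (fun y : E => ‖y‖) (innerSL ℝ (x : E)) x := by
  have h := (hasStrictFDerivAt_norm_sq (x : E)).hasFDerivAt.sqrt (by simp)
  simpa [Real.sqrt_sq (norm_nonneg _), smul_smul, ← Nat.cast_smul_eq_nsmul ℝ] using h

variable {n : ℕ} [Fact (finrank ℝ E = n + 1)]

lemma contDiffAt_homExt (g : C^∞⟮𝓡 n, sphere (0 : E) 1; ℝ⟯) {x : E} (hx : x ≠ 0) :
    ContDiffAt ℝ ∞ (homExt g) x := by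
  let U : TopologicalSpace.Opens E := ⟨{0}ᶜ, isOpen_compl_singleton⟩
  have hcoe : ContMDiff 𝓘(ℝ, E) 𝓘(ℝ, E) ∞ (fun y : U => (y : E)) := contMDiff_subtype_val
  have hnormalize : ContMDiff 𝓘(ℝ, E) 𝓘(ℝ, E) ∞ (fun y : U => ‖(y : E)‖⁻¹ • (y : E)) :=
    fun y => ContMDiffAt.comp y (ContDiffAt.contMDiffAt (f := fun z : E => ‖z‖⁻¹ • z)
      (((contDiffAt_norm ℝ y.2).inv (norm_ne_zero_iff.2 y.2)).smul contDiffAt_id)) (hcoe y)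
  have h := g.contMDiff.comp
    (hnormalize.codRestrict_sphere fun y => inv_norm_smul_mem_sphere y.2)
  rw [← contMDiffAt_iff_contDiffAt, ← contMDiffAt_subtype_iff (U := U) (x := ⟨x, hx⟩)]
  exact (h.congr fun y => homExt_of_ne_zero g y.2) _

lemma differentiableAt_homExt (g : C^∞⟮𝓡 n, sphere (0 : E) 1; ℝ⟯) {x : E} (hx : x ≠ 0) :
    DifferentiableAt ℝ (homExt g) x :=
  (contDiffAt_homExt g hx).differentiableAt (by simp)

lemma contDiffAt_fderiv_homExt (g : C^∞⟮𝓡 n, sphere (0 : E) 1; ℝ⟯) {x : E} (hx : x ≠ 0) :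
    ContDiffAt ℝ ∞ (fderiv ℝ (homExt g)) x :=
  (contDiffAt_homExt g hx).fderiv_right (by simp)

lemma contMDiff_comp_coe_sphere {F : E → ℝ} (hF : ContDiffOn ℝ ∞ F {0}ᶜ) :
    ContMDiff (𝓡 n) 𝓘(ℝ, ℝ) ∞ fun x : sphere (0 : E) 1 => F x :=
  hF.contMDiffOn.comp_contMDiff contMDiff_coe_sphere ne_zero_of_mem_unit_sphere

/-- The directional derivative of a function on the sphere along the tangential projection of `v`,
which is the conformal vector field `∇⟪v, ·⟫`. -/
def tangentialDeriv (v : E) :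
    Derivation ℝ C^∞⟮𝓡 n, sphere (0 : E) 1; ℝ⟯ C^∞⟮𝓡 n, sphere (0 : E) 1; ℝ⟯ :=
  Derivation.mk'
    { toFun := fun g => ⟨fun x => fderiv ℝ (homExt g) x v, contMDiff_comp_coe_sphere
        (F := fun x => fderiv ℝ (homExt g) x v) fun _ hx =>
          ((contDiffAt_fderiv_homExt g hx).clm_apply contDiffAt_const).contDiffWithinAt⟩
      map_add' := fun f g => by
        ext x
        have hx := ne_zero_of_mem_unit_sphere x
        change fderiv ℝ (homExt (⇑f + ⇑g)) x v = fderiv ℝ (homExt f) x v + fderiv ℝ (homExt g) x v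
        rw [homExt_add, fderiv_add (differentiableAt_homExt f hx) (differentiableAt_homExt g hx),
          add_apply]
      map_smul' := fun c f => by
        ext x
        have hx := ne_zero_of_mem_unit_sphere x
        change fderiv ℝ (homExt (c • ⇑f)) x v = c • fderiv ℝ (homExt f) x v
        rw [homExt_const_smul, fderiv_const_smul (differentiableAt_homExt f hx), smul_apply] }
    fun f g => by
      ext x
      have hx := ne_zero_of_mem_unit_sphere x
      change fderiv ℝ (homExt (⇑f * ⇑g)) x v
        = f x * fderiv ℝ (homExt g) x v + g x * fderiv ℝ (homExt f) x v
      rw [homExt_mul, fderiv_mul (differentiableAt_homExt f hx) (differentiableAt_homExt g hx),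
        homExt_coe, homExt_coe, add_apply, smul_apply, smul_apply, smul_eq_mul, smul_eq_mul]

lemma tangentialDeriv_apply (v : E) (g : C^∞⟮𝓡 n, sphere (0 : E) 1; ℝ⟯) (x : sphere (0 : E) 1) :
    tangentialDeriv v g x = fderiv ℝ (homExt g) x v := rfl

lemma homExt_tangentialDeriv (v : E) (g : C^∞⟮𝓡 n, sphere (0 : E) 1; ℝ⟯) {x : E} (hx : x ≠ 0) :
    homExt (tangentialDeriv v g) x = ‖x‖ * fderiv ℝ (homExt g) x v := by
  have hpos := norm_pos_iff.2 hx
  rw [homExt_of_ne_zero _ hx, tangentialDeriv_apply, ← fderiv_homExt_smul g (inv_pos.2 hpos) x,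
    mul_inv_cancel_left₀ hpos.ne']

lemma tangentialDeriv_tangentialDeriv_apply (u v : E) (g : C^∞⟮𝓡 n, sphere (0 : E) 1; ℝ⟯)
    (x : sphere (0 : E) 1) :
    tangentialDeriv u (tangentialDeriv v g) x
      = ⟪(x : E), u⟫ * tangentialDeriv v g x + fderiv ℝ (fderiv ℝ (homExt g)) x u v := by
  have hx := ne_zero_of_mem_unit_sphere x
  have hext : homExt (tangentialDeriv v g) =ᶠ[nhds (x : E)]
      fun y => ‖y‖ * fderiv ℝ (homExt g) y v :=
    Filter.eventuallyEq_of_mem (isOpen_compl_singleton.mem_nhds hx) fun y hy =>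
      homExt_tangentialDeriv v g hy
  have hdiff : DifferentiableAt ℝ (fderiv ℝ (homExt g)) x :=
    (contDiffAt_fderiv_homExt g hx).differentiableAt (by simp)
  have hprod := (hasFDerivAt_norm_of_mem_sphere x).mul
    (hdiff.hasFDerivAt.clm_apply (hasFDerivAt_const v (x : E)))
  rw [tangentialDeriv_apply, (hprod.congr_of_eventuallyEq hext).fderiv]
  simp only [norm_eq_of_mem_sphere, ContinuousLinearMap.comp_zero, zero_add, one_smul, add_apply,
    ContinuousLinearMap.flip_apply, smul_apply, coe_innerSL_apply, smul_eq_mul,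
    tangentialDeriv_apply]
  ring

/-- The restriction to the sphere of the linear function `⟪v, ·⟫`. -/
def sphereHeight (v : E) : C^∞⟮𝓡 n, sphere (0 : E) 1; ℝ⟯ :=
  ⟨fun x => ⟪v, (x : E)⟫, contMDiff_comp_coe_sphere (innerSL ℝ v).contDiff.contDiffOn⟩

lemma sphereHeight_apply (v : E) (x : sphere (0 : E) 1) :
    (sphereHeight v : C^∞⟮𝓡 n, sphere (0 : E) 1; ℝ⟯) x = ⟪v, (x : E)⟫ := rfl

lemma tangentialDeriv_sphereHeight (u v : E) :
    tangentialDeriv u (sphereHeight v : C^∞⟮𝓡 n, sphere (0 : E) 1; ℝ⟯)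
      = ⟪u, v⟫ • 1 - sphereHeight u * sphereHeight v := by
  ext x
  have hx := ne_zero_of_mem_unit_sphere x
  have hext : homExt (sphereHeight v : C^∞⟮𝓡 n, sphere (0 : E) 1; ℝ⟯) =ᶠ[nhds (x : E)]
      fun y => ‖y‖⁻¹ * innerSL ℝ v y :=
    Filter.eventuallyEq_of_mem (isOpen_compl_singleton.mem_nhds hx) fun y hy => by
      simp [homExt_of_ne_zero _ hy, sphereHeight_apply, real_inner_smul_right]
  have hinv := (hasDerivAt_inv (norm_ne_zero_iff.2 hx)).comp_hasFDerivAt (x : E)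
    (hasFDerivAt_norm_of_mem_sphere x)
  have hprod := hinv.mul (innerSL ℝ v).hasFDerivAt
  rw [tangentialDeriv_apply, (hprod.congr_of_eventuallyEq hext).fderiv]
  simp only [Function.comp_apply, norm_eq_of_mem_sphere, inv_one, one_smul, coe_innerSL_apply,
    one_pow, neg_smul, smul_neg, add_apply, real_inner_comm, neg_apply, smul_apply, smul_eq_mul,
    ContMDiffMap.coe_sub, ContMDiffMap.coe_smul, ContMDiffMap.coe_one, ContMDiffMap.coe_mul,
    Pi.sub_apply, Pi.smul_apply, Pi.one_apply, mul_one, Pi.mul_apply, sphereHeight_apply]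
  ring

lemma tangentialDeriv_sphereHeight_comm (u v : E) :
    tangentialDeriv u (sphereHeight v : C^∞⟮𝓡 n, sphere (0 : E) 1; ℝ⟯)
      = tangentialDeriv v (sphereHeight u) := by
  rw [tangentialDeriv_sphereHeight, tangentialDeriv_sphereHeight, real_inner_comm, mul_comm]

lemma tangentialDeriv_comm (u v : E) (g : C^∞⟮𝓡 n, sphere (0 : E) 1; ℝ⟯) :
    tangentialDeriv u (tangentialDeriv v g) = tangentialDeriv v (tangentialDeriv u g)
      + sphereHeight u * tangentialDeriv v g - sphereHeight v * tangentialDeriv u g := by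
  ext x
  have hsymm := (contDiffAt_homExt g (ne_zero_of_mem_unit_sphere x)).isSymmSndFDerivAt
    (by simpa using ENat.LEInfty.out) u v
  simp only [tangentialDeriv_tangentialDeriv_apply, real_inner_comm, hsymm, ContMDiffMap.coe_sub,
    ContMDiffMap.coe_add, ContMDiffMap.coe_mul, Pi.sub_apply, Pi.add_apply, Pi.mul_apply,
    sphereHeight_apply]
  ring

section Basis

variable {ι : Type*} [Fintype ι] (b : OrthonormalBasis ι ℝ E)

lemma smoothSphere_sum_apply (F : ι → C^∞⟮𝓡 n, sphere (0 : E) 1; ℝ⟯) (x : sphere (0 : E) 1) :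
    (∑ i, F i) x = ∑ i, F i x :=
  map_sum (ContMDiffMap.evalRingHom x) F Finset.univ

lemma sum_sphereHeight_sq :
    ∑ i, (sphereHeight (b i) : C^∞⟮𝓡 n, sphere (0 : E) 1; ℝ⟯) ^ 2 = 1 := by
  ext x
  simpa [smoothSphere_sum_apply, sphereHeight_apply] using b.sum_sq_inner_right (x : E)

lemma sum_tangentialDeriv_sphereHeight :
    ∑ i, tangentialDeriv (b i) (sphereHeight (b i) : C^∞⟮𝓡 n, sphere (0 : E) 1; ℝ⟯)
      = (n : ℝ) • 1 := by
  have hcard : Fintype.card ι = n + 1 :=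
    (finrank_eq_card_basis b.toBasis).symm.trans Fact.out
  simp only [tangentialDeriv_sphereHeight, b.inner_eq_one, one_smul, ← pow_two,
    Finset.sum_sub_distrib, sum_sphereHeight_sq]
  simp [hcard, Nat.cast_smul_eq_nsmul]

variable (v : E) (f g : C^∞⟮𝓡 n, sphere (0 : E) 1; ℝ⟯)

lemma sum_inner_smul_tangentialDeriv :
    ∑ i, ⟪b i, v⟫ • tangentialDeriv (b i) f = tangentialDeriv v f := by
  ext x
  conv_rhs => rw [tangentialDeriv_apply, ← b.sum_repr' v, map_sum]
  simp [smoothSphere_sum_apply, tangentialDeriv_apply]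

lemma sum_sphereHeight_mul_tangentialDeriv :
    ∑ i, sphereHeight (b i) * tangentialDeriv (b i) f = 0 := by
  ext x
  have hx := fderiv_homExt_self (differentiableAt_homExt f (ne_zero_of_mem_unit_sphere x))
  rw [← tangentialDeriv_apply, ← sum_inner_smul_tangentialDeriv b, smoothSphere_sum_apply] at hx
  simpa [smoothSphere_sum_apply, sphereHeight_apply] using hx

lemma sum_tangentialDeriv_sphereHeight_mul_tangentialDeriv :
    ∑ i, tangentialDeriv (b i) (sphereHeight v) * tangentialDeriv (b i) f
      = tangentialDeriv v f := by
  have hrad : ∑ i, sphereHeight (b i) * sphereHeight v * tangentialDeriv (b i) f = 0 := by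
    simp only [mul_right_comm _ (sphereHeight v), ← Finset.sum_mul,
      sum_sphereHeight_mul_tangentialDeriv, zero_mul]
  simp only [tangentialDeriv_sphereHeight, sub_mul, smul_mul_assoc, one_mul,
    Finset.sum_sub_distrib, hrad, sum_inner_smul_tangentialDeriv, sub_zero]

lemma sum_sphereHeight_mul_tangentialDeriv_tangentialDeriv :
    ∑ i, sphereHeight (b i) * tangentialDeriv v (tangentialDeriv (b i) f)
      = -tangentialDeriv v f := by
  have hrad := congrArg (tangentialDeriv v) (sum_sphereHeight_mul_tangentialDeriv b f)
  have hsum := sum_tangentialDeriv_sphereHeight_mul_tangentialDeriv b v f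
  simp only [map_sum, Derivation.leibniz, smul_eq_mul, map_zero, Finset.sum_add_distrib,
    tangentialDeriv_sphereHeight_comm v, mul_comm (tangentialDeriv _ f), hsum] at hrad
  exact eq_neg_of_add_eq_zero_left hrad

/-- Averaging the rotation fields over the planes that contain `v` produces the conformal field
`∇⟪v, ·⟫`. -/
lemma sum_sphereHeight_rotation :
    ∑ i, (sphereHeight (b i) * tangentialDeriv v (sphereHeight (b i) * f)
        - sphereHeight v * tangentialDeriv (b i) (sphereHeight (b i) * f))
      = tangentialDeriv v f - (n : ℝ) • (sphereHeight v * f) := by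
  have hrad : ∑ i, sphereHeight (b i) * (f * tangentialDeriv v (sphereHeight (b i))) = 0 := by
    simp only [tangentialDeriv_sphereHeight_comm v, mul_left_comm _ f, ← Finset.mul_sum,
      sum_sphereHeight_mul_tangentialDeriv, mul_zero]
  simp only [Derivation.leibniz, smul_eq_mul, mul_add, ← mul_assoc, ← pow_two,
    Finset.sum_sub_distrib, Finset.sum_add_distrib, ← Finset.sum_mul, sum_sphereHeight_sq]
  simp only [mul_assoc, ← Finset.mul_sum, hrad, sum_sphereHeight_mul_tangentialDeriv,
    sum_tangentialDeriv_sphereHeight, mul_smul_comm, mul_one, mul_zero, one_mul]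
  module

end Basis

section Laplacian

variable [FiniteDimensional ℝ E]

/-- The Laplace–Beltrami operator of the unit sphere, as the sum of the squares of the tangential
derivatives along an orthonormal basis of the ambient space. -/
def sphereLaplacian :
    C^∞⟮𝓡 n, sphere (0 : E) 1; ℝ⟯ →ₗ[ℝ] C^∞⟮𝓡 n, sphere (0 : E) 1; ℝ⟯ :=
  ∑ i, (tangentialDeriv (stdOrthonormalBasis ℝ E i)).toLinearMap ∘ₗ
    (tangentialDeriv (stdOrthonormalBasis ℝ E i)).toLinearMap

variable (v : E) (f g : C^∞⟮𝓡 n, sphere (0 : E) 1; ℝ⟯)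

lemma sphereLaplacian_eq_sum :
    sphereLaplacian f = ∑ i, tangentialDeriv (stdOrthonormalBasis ℝ E i)
      (tangentialDeriv (stdOrthonormalBasis ℝ E i) f) := by
  simp [sphereLaplacian]

lemma sphereLaplacian_apply (x : sphere (0 : E) 1) :
    sphereLaplacian f x = Δ (homExt f) x := by
  have hrad := congrArg (· x) (sum_sphereHeight_mul_tangentialDeriv (stdOrthonormalBasis ℝ E) f)
  simp only [smoothSphere_sum_apply, ContMDiffMap.coe_mul, Pi.mul_apply, sphereHeight_apply,
    real_inner_comm] at hrad
  simp only [sphereLaplacian_eq_sum, smoothSphere_sum_apply, tangentialDeriv_tangentialDeriv_apply,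
    Finset.sum_add_distrib, hrad]
  simp [InnerProductSpace.laplacian_eq_iteratedFDeriv_stdOrthonormalBasis, iteratedFDeriv_two_apply]

lemma sphereLaplacian_mul :
    sphereLaplacian (f * g) = f * sphereLaplacian g + sphereLaplacian f * g
      + (2 : ℝ) • ∑ i, tangentialDeriv (stdOrthonormalBasis ℝ E i) f
        * tangentialDeriv (stdOrthonormalBasis ℝ E i) g := by
  simp only [sphereLaplacian_eq_sum, Derivation.leibniz, smul_eq_mul, map_add,
    Finset.sum_add_distrib, Finset.mul_sum, two_smul, mul_comm]
  abel

lemma sphereLaplacian_sphereHeight :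
    sphereLaplacian (sphereHeight v : C^∞⟮𝓡 n, sphere (0 : E) 1; ℝ⟯)
      = -(n : ℝ) • sphereHeight v := by
  set b := stdOrthonormalBasis ℝ E
  have hterm : ∀ i, tangentialDeriv (b i) (tangentialDeriv (b i) (sphereHeight v))
      = -(sphereHeight (b i) * tangentialDeriv (b i) (sphereHeight v))
        - sphereHeight v * tangentialDeriv (b i)
          (sphereHeight (b i) : C^∞⟮𝓡 n, sphere (0 : E) 1; ℝ⟯) := fun i => by
    have h := congrArg (tangentialDeriv (b i))
      (tangentialDeriv_sphereHeight (n := n) (b i) v)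
    simp only [map_sub, Derivation.map_smul, Derivation.map_one_eq_zero, Derivation.leibniz,
      smul_eq_mul, smul_zero] at h
    linear_combination h
  simp only [sphereLaplacian_eq_sum, hterm, Finset.sum_sub_distrib, Finset.sum_neg_distrib,
    ← Finset.mul_sum, b, sum_sphereHeight_mul_tangentialDeriv, sum_tangentialDeriv_sphereHeight,
    mul_smul_comm, mul_one, neg_zero, zero_sub, neg_smul]

lemma sphereLaplacian_sphereHeight_mul :
    sphereLaplacian (sphereHeight v * f) = sphereHeight v * sphereLaplacian f
      - (n : ℝ) • (sphereHeight v * f) + (2 : ℝ) • tangentialDeriv v f := by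
  rw [sphereLaplacian_mul, sphereLaplacian_sphereHeight,
    sum_tangentialDeriv_sphereHeight_mul_tangentialDeriv, smul_mul_assoc, neg_smul,
    ← sub_eq_add_neg]

lemma sphereLaplacian_tangentialDeriv :
    sphereLaplacian (tangentialDeriv v f) = tangentialDeriv v (sphereLaplacian f)
      - (2 : ℝ) • (sphereHeight v * sphereLaplacian f) + ((n : ℝ) - 2) • tangentialDeriv v f := by
  set b := stdOrthonormalBasis ℝ E
  have hterm : ∀ i, tangentialDeriv (b i) (tangentialDeriv (b i) (tangentialDeriv v f))
      = tangentialDeriv v (tangentialDeriv (b i) (tangentialDeriv (b i) f))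
        + sphereHeight (b i) * tangentialDeriv v (tangentialDeriv (b i) f)
        - (2 : ℝ) • (sphereHeight v * tangentialDeriv (b i) (tangentialDeriv (b i) f))
        + tangentialDeriv (b i) (sphereHeight (b i)) * tangentialDeriv v f
        + sphereHeight (b i) * tangentialDeriv (b i) (tangentialDeriv v f)
        - tangentialDeriv (b i) (sphereHeight v) * tangentialDeriv (b i) f := fun i => by
    have h := congrArg (tangentialDeriv (b i)) (tangentialDeriv_comm (b i) v f)
    simp only [map_add, map_sub, Derivation.leibniz, smul_eq_mul] at h
    simp only [two_smul]
    linear_combination h + tangentialDeriv_comm (b i) v (tangentialDeriv (b i) f)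
  simp only [sphereLaplacian_eq_sum, hterm, Finset.sum_add_distrib, Finset.sum_sub_distrib,
    ← Finset.sum_mul, ← Finset.mul_sum, ← Finset.smul_sum, ← map_sum, b,
    sum_tangentialDeriv_sphereHeight, sum_sphereHeight_mul_tangentialDeriv,
    sum_sphereHeight_mul_tangentialDeriv_tangentialDeriv,
    sum_tangentialDeriv_sphereHeight_mul_tangentialDeriv, smul_mul_assoc, one_mul]
  module

/-- The Paneitz operator of the round unit sphere of dimension `n`, that is
`(-Δ + n(n - 2)/4) (-Δ + (n + 2)(n - 4)/4)`, in expanded form. -/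
def spherePaneitz :
    C^∞⟮𝓡 n, sphere (0 : E) 1; ℝ⟯ →ₗ[ℝ] C^∞⟮𝓡 n, sphere (0 : E) 1; ℝ⟯ :=
  sphereLaplacian ∘ₗ sphereLaplacian - (((n : ℝ) ^ 2 - 2 * n - 4) / 2) • sphereLaplacian
    + ((n : ℝ) * (n ^ 2 - 4) * (n - 4) / 16) • LinearMap.id

lemma spherePaneitz_eq :
    spherePaneitz f = sphereLaplacian (sphereLaplacian f)
      - (((n : ℝ) ^ 2 - 2 * n - 4) / 2) • sphereLaplacian f
      + ((n : ℝ) * (n ^ 2 - 4) * (n - 4) / 16) • f := rfl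

/-- The infinitesimal conformal covariance of the Paneitz operator, which maps densities of weight
`(n - 4) / 2` to densities of weight `(n + 4) / 2`. -/
lemma spherePaneitz_conformal :
    spherePaneitz (tangentialDeriv v f - (((n : ℝ) - 4) / 2) • (sphereHeight v * f))
      = tangentialDeriv v (spherePaneitz f)
        - (((n : ℝ) + 4) / 2) • (sphereHeight v * spherePaneitz f) := by
  simp only [spherePaneitz_eq, map_add, map_sub, map_smul, Derivation.map_smul,
    sphereLaplacian_tangentialDeriv, sphereLaplacian_sphereHeight_mul, mul_add, mul_sub,
    mul_smul_comm]
  module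

end Laplacian

section Integral

variable [FiniteDimensional ℝ E] [MeasurableSpace E] [BorelSpace E]

lemma hausdorffMeasure_closedBall_lt_top {V : Type*} [NormedAddCommGroup V] [NormedSpace ℝ V]
    [FiniteDimensional ℝ V] [MeasurableSpace V] [BorelSpace V] (x : V) (r : ℝ) :
    μH[finrank ℝ V] (closedBall x r) < ⊤ :=
  (isCompact_closedBall x r).measure_lt_top

/-- The stereographic charts are bi-Lipschitz near their centres, so the sphere is covered by
finitely many Lipschitz images of `n`-dimensional balls. -/
instance isFiniteMeasure_hausdorffMeasure_sphere :
    IsFiniteMeasure (μH[n] : Measure (sphere (0 : E) 1)) := by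
  suffices IsLocallyFiniteMeasure (μH[n] : Measure (sphere (0 : E) 1)) by infer_instance
  refine ⟨fun x => ?_⟩
  set v := -x
  set e := stereographic (norm_eq_of_mem_sphere v)
  have hsmooth : ContDiff ℝ 1 (stereoInvFunAux (v : E) ∘ (ℝ ∙ (v : E))ᗮ.subtypeL) :=
    contDiff_stereoInvFunAux.comp (ℝ ∙ (v : E))ᗮ.subtypeL.contDiff
  obtain ⟨K, t, ht, hlip⟩ := (hsmooth.contDiffAt (x := 0)).exists_lipschitzOnWith
  have hlip_ball : LipschitzOnWith K e.symm (t ∩ closedBall 0 1) :=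
    fun y hy z hz => hlip hy.1 hz.1
  have hcentre : e.symm 0 = x := by
    rw [← stereographic_neg_apply x]
    exact e.left_inv (by simpa [e] using ne_neg_of_mem_unit_sphere ℝ x)
  refine ⟨e.symm '' (t ∩ closedBall 0 1), ?_, ?_⟩
  · rw [← hcentre]
    exact e.symm.image_mem_nhds (by simp [e])
      (Filter.inter_mem ht (closedBall_mem_nhds 0 one_pos))
  · have hball := hausdorffMeasure_closedBall_lt_top (0 : (ℝ ∙ (v : E))ᗮ) 1
    rw [Submodule.finrank_orthogonal_span_singleton (n := n)
      (ne_zero_of_mem_unit_sphere v)] at hball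
    refine (hlip_ball.hausdorffMeasure_image_le n.cast_nonneg).trans_lt (ENNReal.mul_lt_top ?_ ?_)
    · exact ENNReal.rpow_lt_top_of_nonneg n.cast_nonneg ENNReal.coe_ne_top
    · exact (measure_mono inter_subset_right).trans_lt hball

lemma integrable_hausdorffMeasure_sphere {g : sphere (0 : E) 1 → ℝ} (hg : Continuous g) :
    Integrable g μH[n] :=
  hg.integrable_of_hasCompactSupport (HasCompactSupport.of_compactSpace _)

/-- Integration over the unit sphere against its `n`-dimensional Hausdorff measure. -/
def sphereIntegral : C^∞⟮𝓡 n, sphere (0 : E) 1; ℝ⟯ →ₗ[ℝ] ℝ where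
  toFun g := ∫ x, g x ∂μH[n]
  map_add' f g := integral_add (integrable_hausdorffMeasure_sphere f.contMDiff.continuous)
    (integrable_hausdorffMeasure_sphere g.contMDiff.continuous)
  map_smul' c f := integral_const_mul c f

lemma sphereIntegral_apply (g : C^∞⟮𝓡 n, sphere (0 : E) 1; ℝ⟯) :
    sphereIntegral g = ∫ x, g x ∂μH[n] := rfl

/-- The isometry of the unit sphere induced by a linear isometry of the ambient space. -/
def sphereIsometry (R : E ≃ₗᵢ[ℝ] E) : sphere (0 : E) 1 ≃ᵢ sphere (0 : E) 1 where
  toEquiv := R.toEquiv.subtypeEquiv fun x => by simp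
  isometry_toFun x y := R.isometry x y

/-- A skew-adjoint map generates a flow of isometries, which preserves integrals. -/
lemma integral_fderiv_homExt_of_mem_skewAdjoint {A : E →L[ℝ] E}
    (hA : A ∈ skewAdjoint (E →L[ℝ] E)) (g : C^∞⟮𝓡 n, sphere (0 : E) 1; ℝ⟯) :
    ∫ x : sphere (0 : E) 1, fderiv ℝ (homExt g) x (A x) ∂μH[n] = 0 := by
  choose R hR using fun θ : ℝ => exists_linearIsometryEquiv_exp (skewAdjoint.smul_mem θ hA)
  let Φ := fun θ => sphereIsometry (R θ)
  let Lg := fun x : sphere (0 : E) 1 => fderiv ℝ (homExt g) x (A x)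
  have hΦ : ∀ θ x, (Φ θ x : E) = NormedSpace.exp (θ • A) (x : E) := fun θ x => congrFun (hR θ) x
  have hLg : Continuous Lg := continuous_iff_continuousAt.2 fun x =>
    ((contDiffAt_fderiv_homExt g (ne_zero_of_mem_unit_sphere x)).continuousAt.clm_apply
      A.continuous.continuousAt).comp continuous_subtype_val.continuousAt
  obtain ⟨C, hC⟩ := isCompact_univ.exists_bound_of_continuousOn hLg.continuousOn
  have hderiv : ∀ θ x, HasDerivAt (fun t => g (Φ t x)) (Lg (Φ θ x)) θ := fun θ x => by
    have hflow := hasDerivAt_exp_smul_apply A θ (x : E)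
    simp only [← hΦ] at hflow
    have hcomp := (differentiableAt_homExt g
      (ne_zero_of_mem_unit_sphere (Φ θ x))).hasFDerivAt.comp_hasDerivAt θ hflow
    exact hcomp.congr_of_eventuallyEq (.of_forall fun t => (homExt_coe g (Φ t x)).symm)
  have hcont : ∀ {f : sphere (0 : E) 1 → ℝ} (θ : ℝ), Continuous f → Continuous fun x => f (Φ θ x) :=
    fun θ hf => hf.comp (Φ θ).continuous
  have hint := (hasDerivAt_integral_of_dominated_loc_of_deriv_le (μ := μH[n]) (x₀ := (0 : ℝ))
    (F := fun θ x => g (Φ θ x)) (F' := fun θ x => Lg (Φ θ x)) (bound := fun _ => C)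
    Filter.univ_mem
    (.of_forall fun θ => (hcont θ g.contMDiff.continuous).aestronglyMeasurable)
    (integrable_hausdorffMeasure_sphere (hcont 0 g.contMDiff.continuous))
    (hcont 0 hLg).aestronglyMeasurable (.of_forall fun x θ _ => hC _ (mem_univ _))
    (integrable_const C) (.of_forall fun x θ _ => hderiv θ x)).2
  have hinv : ∀ (f : sphere (0 : E) 1 → ℝ) θ, ∫ x, f (Φ θ x) ∂μH[n] = ∫ x, f x ∂μH[n] := fun f θ =>
    ((Φ θ).measurePreserving_hausdorffMeasure n).integral_comp
      (Φ θ).toHomeomorph.measurableEmbedding f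
  simp only [hinv] at hint
  exact hint.unique (hasDerivAt_const _ _)

variable (u v : E) (f g : C^∞⟮𝓡 n, sphere (0 : E) 1; ℝ⟯)

lemma sphereIntegral_rotation :
    sphereIntegral (sphereHeight u * tangentialDeriv v f - sphereHeight v * tangentialDeriv u f)
      = 0 := by
  have hskew : InnerProductSpace.rankOne ℝ v u - InnerProductSpace.rankOne ℝ u v
      ∈ skewAdjoint (E →L[ℝ] E) := by
    simp [skewAdjoint.mem_iff, ContinuousLinearMap.star_eq_adjoint]
  rw [sphereIntegral_apply, ← integral_fderiv_homExt_of_mem_skewAdjoint hskew f]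
  exact integral_congr_ae (.of_forall fun x => by
    simp [sphereHeight_apply, tangentialDeriv_apply])

lemma sphereIntegral_tangentialDeriv :
    sphereIntegral (tangentialDeriv v f) = n * sphereIntegral (sphereHeight v * f) := by
  have h := congrArg sphereIntegral (sum_sphereHeight_rotation (stdOrthonormalBasis ℝ E) v f)
  rw [map_sum, Finset.sum_eq_zero fun i _ => sphereIntegral_rotation _ _ _, map_sub, map_smul,
    smul_eq_mul] at h
  exact sub_eq_zero.1 h.symm

lemma sphereIntegral_mul_tangentialDeriv :
    sphereIntegral (f * tangentialDeriv v g) = n * sphereIntegral (sphereHeight v * (f * g))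
      - sphereIntegral (tangentialDeriv v f * g) := by
  rw [← sphereIntegral_tangentialDeriv, Derivation.leibniz, map_add, smul_eq_mul, smul_eq_mul,
    mul_comm g, add_sub_cancel_right]

lemma sphereIntegral_mul_sphereLaplacian :
    sphereIntegral (f * sphereLaplacian g) = -∑ i, sphereIntegral
      (tangentialDeriv (stdOrthonormalBasis ℝ E i) f
        * tangentialDeriv (stdOrthonormalBasis ℝ E i) g) := by
  set b := stdOrthonormalBasis ℝ E
  have hrad : ∑ i, sphereIntegral (sphereHeight (b i) * (f * tangentialDeriv (b i) g)) = 0 := by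
    simp only [mul_left_comm _ f, ← map_sum, ← Finset.mul_sum,
      sum_sphereHeight_mul_tangentialDeriv, mul_zero, map_zero]
  rw [sphereLaplacian_eq_sum, Finset.mul_sum, map_sum]
  simp only [sphereIntegral_mul_tangentialDeriv _ f, Finset.sum_sub_distrib, ← Finset.mul_sum, b,
    hrad, mul_zero, zero_sub]

lemma sphereIntegral_mul_sphereLaplacian_comm :
    sphereIntegral (f * sphereLaplacian g) = sphereIntegral (g * sphereLaplacian f) := by
  simp only [sphereIntegral_mul_sphereLaplacian, mul_comm]

lemma sphereIntegral_mul_spherePaneitz_comm :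
    sphereIntegral (f * spherePaneitz g) = sphereIntegral (g * spherePaneitz f) := by
  have hsq : sphereIntegral (f * sphereLaplacian (sphereLaplacian g))
      = sphereIntegral (g * sphereLaplacian (sphereLaplacian f)) := by
    rw [sphereIntegral_mul_sphereLaplacian_comm, mul_comm,
      sphereIntegral_mul_sphereLaplacian_comm]
  simp only [spherePaneitz_eq, mul_add, mul_sub, mul_smul_comm, map_add, map_sub, map_smul, hsq,
    sphereIntegral_mul_sphereLaplacian_comm f g, mul_comm f g]

/-- The generator `D_v - ((n - 4) / 2) ξ_v` of the conformal action is skew-adjoint up to weight,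
so `P` intertwines it with minus its own transpose. -/
lemma sphereIntegral_spherePaneitz_mul_conformal :
    sphereIntegral (spherePaneitz f * (tangentialDeriv v f
      - (((n : ℝ) - 4) / 2) • (sphereHeight v * f))) = 0 := by
  have hsymm := sphereIntegral_mul_spherePaneitz_comm f
    (tangentialDeriv v f - (((n : ℝ) - 4) / 2) • (sphereHeight v * f))
  have hparts := sphereIntegral_mul_tangentialDeriv v f (spherePaneitz f)
  rw [spherePaneitz_conformal] at hsymm
  simp only [mul_sub, sub_mul, mul_smul_comm, smul_mul_assoc, map_sub, map_smul, smul_eq_mul,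
    mul_left_comm f, mul_assoc, mul_comm (spherePaneitz f)] at hsymm hparts ⊢
  linarith

variable {v f}

/-- The equation `hκ` is satisfied by `κ = ρ ^ ((n + 4) / (n - 4))`, the conformally covariant
nonlinearity. -/
lemma sphereIntegral_kazdanWarner (hn : n ≠ 4) {χ ρ κ : C^∞⟮𝓡 n, sphere (0 : E) 1; ℝ⟯}
    (hκ : ((n : ℝ) - 4) • (tangentialDeriv v κ * ρ) = ((n : ℝ) + 4) • (κ * tangentialDeriv v ρ))
    (hP : spherePaneitz ρ = -(χ * κ)) :
    sphereIntegral (tangentialDeriv v χ * (κ * ρ)) = 0 := by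
  have hn' : (n : ℝ) - 4 ≠ 0 := sub_ne_zero.2 (by exact_mod_cast hn)
  have hcore : sphereIntegral (χ * (κ * tangentialDeriv v ρ))
      = ((n : ℝ) - 4) / 2 * sphereIntegral (sphereHeight v * (χ * (κ * ρ))) := by
    have h := sphereIntegral_spherePaneitz_mul_conformal v ρ
    simp only [hP, mul_sub, mul_smul_comm, neg_mul, mul_neg, map_sub, map_smul, map_neg, mul_assoc,
      mul_left_comm _ (sphereHeight v), smul_eq_mul] at h
    linarith
  have hparts := sphereIntegral_mul_tangentialDeriv v χ (κ * ρ)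
  have hweight := congrArg (fun h => sphereIntegral (χ * h)) hκ
  simp only [Derivation.leibniz, smul_eq_mul, mul_add, mul_smul_comm, map_add, map_smul,
    mul_comm ρ] at hparts hweight
  apply mul_left_cancel₀ hn'
  linear_combination ((n : ℝ) - 4) * hparts - 2 * n * hcore - hweight

lemma sphereIntegral_kazdanWarner_three [Fact (finrank ℝ E = 3 + 1)]
    {χ ρ σ : C^∞⟮𝓡 3, sphere (0 : E) 1; ℝ⟯} (hσ : σ * ρ = 1)
    (hP : spherePaneitz ρ = -(χ * σ ^ 7)) :
    sphereIntegral (tangentialDeriv v χ * σ ^ 6) = 0 := by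
  have hpow : σ ^ 7 * ρ = σ ^ 6 := by rw [pow_succ, mul_assoc, hσ, mul_one]
  have hderiv : tangentialDeriv v (σ ^ 7) * ρ = -(7 : ℝ) • (σ ^ 7 * tangentialDeriv v ρ) := by
    rw [Derivation.leibniz_pow, Derivation.leibniz_of_mul_eq_one _ hσ]
    simp only [smul_eq_mul, Algebra.smul_def, map_neg, map_ofNat]
    linear_combination (-7 * σ ^ 7 * tangentialDeriv v ρ) * hσ
  have h := sphereIntegral_kazdanWarner (v := v) (by norm_num) (κ := σ ^ 7)
    (by rw [hderiv, smul_smul]; norm_num) hP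
  rwa [hpow] at h

end Integral
end SphereCalculus

section Bridge

open scoped EuclideanSpace

section Pointwise

variable {f : E4 → ℝ} {g : C^∞⟮𝓡 3, sphere (0 : E4) 1; ℝ⟯}
  (hfg : ∀ x : sphere (0 : E4) 1, f x = g x) (x : sphere (0 : E4) 1)
include hfg

lemma ext0_eventuallyEq_homExt : ext0 f =ᶠ[nhds (x : E4)] homExt g :=
  Filter.eventuallyEq_of_mem
    (isOpen_compl_singleton.mem_nhds (ne_zero_of_mem_unit_sphere x)) fun y hy => by
      rw [homExt_of_ne_zero g hy, ext0, ← hfg]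

lemma inner_sGrad_eq_tangentialDeriv (v : E4) : ⟪sGrad f x, v⟫ = tangentialDeriv v g x := by
  rw [sGrad, gradient, InnerProductSpace.toDual_symm_apply,
    (ext0_eventuallyEq_homExt hfg x).fderiv_eq, tangentialDeriv_apply]

lemma inner_sGrad_sGrad_inner (v : E4) :
    ⟪sGrad f x, sGrad (fun y => ⟪v, y⟫) x⟫ = tangentialDeriv v g x := by
  set b := EuclideanSpace.basisFun (Fin 4) ℝ
  rw [← b.sum_inner_mul_inner, ← sum_tangentialDeriv_sphereHeight_mul_tangentialDeriv b v g,
    smoothSphere_sum_apply]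
  refine Finset.sum_congr rfl fun i _ => ?_
  rw [inner_sGrad_eq_tangentialDeriv hfg, real_inner_comm,
    inner_sGrad_eq_tangentialDeriv (g := sphereHeight v) fun _ => rfl]
  exact mul_comm _ _

lemma sLap_eq_sphereLaplacian : sLap f x = sphereLaplacian g x := by
  have hdiff : DifferentiableAt ℝ (fderiv ℝ (homExt g)) x :=
    (contDiffAt_fderiv_homExt g (ne_zero_of_mem_unit_sphere x)).differentiableAt (by simp)
  rw [sphereLaplacian_apply, InnerProductSpace.laplacian_eq_iteratedFDeriv_orthonormalBasis _
    (EuclideanSpace.basisFun (Fin 4) ℝ), sLap]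
  refine Finset.sum_congr rfl fun i _ => ?_
  have hfderiv : (fun y => fderiv ℝ (ext0 f) y (EuclideanSpace.single i 1)) =ᶠ[nhds (x : E4)]
      fun y => fderiv ℝ (homExt g) y (EuclideanSpace.single i 1) :=
    (ext0_eventuallyEq_homExt hfg x).fderiv.fun_comp fun L => L (EuclideanSpace.single i 1)
  rw [hfderiv.fderiv_eq, fderiv_clm_apply hdiff (by fun_prop)]
  simp [iteratedFDeriv_two_apply]

lemma Pan_eq_spherePaneitz : Pan f x = spherePaneitz g x := by
  rw [Pan, sLap_eq_sphereLaplacian (sLap_eq_sphereLaplacian hfg), sLap_eq_sphereLaplacian hfg, hfg,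
    spherePaneitz_eq]
  simp only [Nat.reduceAdd, one_div, Nat.cast_ofNat, ContMDiffMap.coe_add, ContMDiffMap.coe_sub,
    ContMDiffMap.coe_smul, Pi.add_apply, Pi.sub_apply, Pi.smul_apply, smul_eq_mul]
  ring

end Pointwise

lemma integral_muS (F : E4 → ℝ) :
    ∫ x, F x ∂muS = ∫ x : sphere (0 : E4) 1, F x ∂μH[(3 : ℕ)] := by
  have hmap := (isometry_subtype_coe (s := sphere (0 : E4) 1)).map_hausdorffMeasure (d := 3)
    (.inl (by norm_num))
  rw [Subtype.range_coe] at hmap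
  rw [muS, S3, ← hmap, Nat.cast_ofNat]
  exact (MeasurableEmbedding.subtype_coe isClosed_sphere.measurableSet).integral_map F

/-- The restriction to the sphere of a function that is smooth in the sense of `SmoothS3`. -/
def SmoothS3.restrict {f : E4 → ℝ} (hf : SmoothS3 f) : C^∞⟮𝓡 3, sphere (0 : E4) 1; ℝ⟯ :=
  ⟨fun x => f x, (contMDiff_comp_coe_sphere hf).congr fun x => by simp [ext0]⟩

theorem stmt_17_general (χ ρ : E4 → ℝ) (hρ : SmoothS3 ρ) (hρ_ne : ∀ x ∈ S3, ρ x ≠ 0)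
    (heq : ∀ x ∈ S3, Pan ρ x = -(χ x * ((ρ x)⁻¹) ^ 7)) (v : E4) :
    ∫ x, ⟪sGrad χ x, sGrad (fun y => ⟪v, y⟫) x⟫ * ((ρ x)⁻¹) ^ 6 ∂muS = 0 := by
  let ρs := hρ.restrict
  let σ : C^∞⟮𝓡 3, sphere (0 : E4) 1; ℝ⟯ :=
    ⟨fun x => (ρ x)⁻¹, ρs.contMDiff.inv₀ fun x => hρ_ne x x.2⟩
  have hσ : σ * ρs = 1 := by
    ext x
    exact inv_mul_cancel₀ (hρ_ne x x.2)
  let χs := -(spherePaneitz ρs * ρs ^ 7)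
  have hP : spherePaneitz ρs = -(χs * σ ^ 7) := by
    have hpow : σ ^ 7 * ρs ^ 7 = 1 := by rw [← mul_pow, hσ, one_pow]
    linear_combination -spherePaneitz ρs * hpow
  have hχ : ∀ x : sphere (0 : E4) 1, χ x = χs x := fun x => by
    have hx := hρ_ne x x.2
    have h := heq x x.2
    rw [Pan_eq_spherePaneitz (g := ρs) (fun _ => rfl) x] at h
    change χ x = -(spherePaneitz ρs x * ρ x ^ 7)
    rw [h]
    field_simp
  rw [integral_muS, ← sphereIntegral_kazdanWarner_three (v := v) hσ hP]
  exact integral_congr_ae (.of_forall fun x => congrArg (· * ((ρ x)⁻¹) ^ 6)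
    (inner_sGrad_sGrad_inner hχ x v))

end Bridge

/-- Kazdan–Warner identity on `S³` for the coordinate functions: if `χ, ρ` are positive
smooth with `Pρ = -χρ⁻⁷`, then `∫_{S³} ⟨∇χ, ∇xᵢ⟩ ρ⁻⁶ dμ = 0` for `i = 1,2,3,4`. -/
theorem stmt_17 (χ ρ : E4 → ℝ) (hχ : SmoothS3 χ) (hρ : SmoothS3 ρ)
    (hχpos : ∀ x ∈ S3, 0 < χ x) (hρpos : ∀ x ∈ S3, 0 < ρ x)
    (heq : ∀ x ∈ S3, Pan ρ x = -(χ x * ((ρ x)⁻¹) ^ 7)) :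
    ∀ i : Fin 4,
      ∫ x, ⟪sGrad χ x, sGrad (fun y => y i) x⟫ * ((ρ x)⁻¹) ^ 6 ∂muS = 0 := fun i => by
  simpa [EuclideanSpace.inner_single_left] using stmt_17_general χ ρ hρ
    (fun x hx => (hρpos x hx).ne') heq (EuclideanSpace.single i 1)
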